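/- Let B be a finite Boolean ring and M a module over B. For each ring homomorphism f : B → F₂, let F₂(f) denote F₂ equipped with the B-module structure obtained by restriction of scalars along f. Then the canonical additive map M → ∏_{f} F₂(f) ⊗_B M, sending m to the family (1 ⊗ m)_f indexed by the ring homomorphisms f : B → F₂, is bijective. -/

import Mathlib

/-!
The characters `B → F₂` of a Boolean ring separate its points, since a Boolean ring is reduced and
each of its residue fields is `F₂`; and by the Chinese remainder theorem finitely many characters
take arbitrary values simultaneously. So `B ≅ ∏_f F₂(f)` as a `B`-module when `B` is finite.
Tensoring this isomorphism with `M` gives the decomposition, because tensor products commute with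
finite products.
-/

open TensorProduct

/-- `F₂(f)`: the field `F₂` viewed as a module over the Boolean ring `B` by restriction of
scalars along the ring homomorphism `f : B → F₂`. -/
def F2of (B : Type*) [BooleanRing B] (_f : B →+* ZMod 2) : Type := ZMod 2

instance (B : Type*) [BooleanRing B] (f : B →+* ZMod 2) : AddCommGroup (F2of B f) :=
  inferInstanceAs (AddCommGroup (ZMod 2))

instance (B : Type*) [BooleanRing B] (f : B →+* ZMod 2) : One (F2of B f) :=
  inferInstanceAs (One (ZMod 2))

instance (B : Type*) [BooleanRing B] (f : B →+* ZMod 2) : Module B (F2of B f) :=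
  Module.compHom (ZMod 2) f

open Function

section TensorProduct

variable {R ι : Type*} [CommSemiring R] [Finite ι] {N : ι → Type*} [∀ i, AddCommMonoid (N i)]
  [∀ i, Module R (N i)]

theorem bijective_pi_tensorProductMk (M : Type*) [AddCommMonoid M] [Module R M] {x : ∀ i, N i}
    (hx : Bijective (LinearMap.toSpanSingleton R (∀ i, N i) x)) :
    Bijective (LinearMap.pi fun i ↦ TensorProduct.mk R (N i) M (x i)) := by
  classical
  have := Fintype.ofFinite ι
  let e : M ≃ₗ[R] ∀ i, N i ⊗[R] M :=
    (TensorProduct.lid R M).symm ≪≫ₗ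
      (LinearEquiv.ofBijective (LinearMap.toSpanSingleton R (∀ i, N i) x) hx).rTensor M ≪≫ₗ
      TensorProduct.piLeft R M N
  have he : (LinearMap.pi fun i ↦ TensorProduct.mk R (N i) M (x i)) = e := by
    ext m i
    simp [e]
  rw [he]
  exact e.bijective

end TensorProduct

section CommRing

variable {R : Type*} [CommRing R] {p : ℕ} [Fact p.Prime]

theorem isCoprime_ker_of_ne {f g : R →+* ZMod p} (hfg : f ≠ g) :
    IsCoprime (RingHom.ker f) (RingHom.ker g) := by
  have hf := RingHom.ker_isMaximal_of_surjective f (ZMod.ringHom_surjective f)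
  have hg := RingHom.ker_isMaximal_of_surjective g (ZMod.ringHom_surjective g)
  exact Ideal.isCoprime_of_isMaximal (mt (ZMod.ringHom_eq_of_ker_eq f g) hfg)

theorem exists_forall_ringHom_zmod_apply_eq [Finite (R →+* ZMod p)] (c : (R →+* ZMod p) → ZMod p) :
    ∃ r : R, ∀ f : R →+* ZMod p, f r = c f := by
  choose s hs using fun f : R →+* ZMod p ↦ ZMod.ringHom_surjective f (c f)
  obtain ⟨r, hr⟩ := Ideal.exists_forall_sub_mem_ideal
    (I := fun f : R →+* ZMod p ↦ RingHom.ker f) (fun _ _ ↦ isCoprime_ker_of_ne) s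
  exact ⟨r, fun f ↦ (RingHom.sub_mem_ker_iff f |>.mp (hr f)).trans (hs f)⟩

end CommRing

section IsIdempotentElem

variable {D : Type*} [Ring D]

theorem charP_two_of_forall_isIdempotentElem [Nontrivial D] (hD : ∀ a : D, IsIdempotentElem a) :
    CharP D 2 := by
  let _ : BooleanRing D := { isIdempotentElem := hD }
  refine CharTwo.of_one_ne_zero_of_two_eq_zero one_ne_zero ?_
  rw [← one_add_one_eq_two, BooleanRing.add_self]

theorem nonempty_ringEquiv_zmod_two_of_forall_isIdempotentElem [IsDomain D]
    (hD : ∀ a : D, IsIdempotentElem a) : Nonempty (D ≃+* ZMod 2) := by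
  have := charP_two_of_forall_isIdempotentElem hD
  have castHom_surjective : Surjective (ZMod.castHom dvd_rfl D : ZMod 2 →+* D) := fun a ↦ by
    obtain rfl | rfl := IsIdempotentElem.iff_eq_zero_or_one.mp (hD a)
    · exact ⟨0, map_zero _⟩
    · exact ⟨1, map_one _⟩
  exact ⟨(RingEquiv.ofBijective _ ⟨RingHom.injective _, castHom_surjective⟩).symm⟩

end IsIdempotentElem

section BooleanRing

variable {B : Type*} [BooleanRing B]

theorem isReduced_of_booleanRing : IsReduced B where
  eq_zero b := fun ⟨n, hn⟩ ↦ by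
    rw [← (BooleanRing.isIdempotentElem b).pow_succ_eq n, pow_succ, hn, zero_mul]

theorem exists_ringHom_zmod_two_ker_eq (I : Ideal B) [I.IsPrime] :
    ∃ f : B →+* ZMod 2, RingHom.ker f = I := by
  obtain ⟨e⟩ := nonempty_ringEquiv_zmod_two_of_forall_isIdempotentElem (D := B ⧸ I) <|
    Ideal.Quotient.mk_surjective.forall.mpr fun b ↦
      (BooleanRing.isIdempotentElem b).map (Ideal.Quotient.mk I)
  exact ⟨e.toRingHom.comp (Ideal.Quotient.mk I), by rw [RingHom.ker_equiv_comp, Ideal.mk_ker]⟩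

theorem eq_zero_of_forall_ringHom_zmod_two {b : B} (hb : ∀ f : B →+* ZMod 2, f b = 0) : b = 0 := by
  have hmem : b ∈ nilradical B := by
    rw [nilradical_eq_sInf, Ideal.mem_sInf]
    intro I (hI : I.IsPrime)
    obtain ⟨f, rfl⟩ := exists_ringHom_zmod_two_ker_eq I
    exact hb f
  have := isReduced_of_booleanRing (B := B)
  exact (mem_nilradical.mp hmem).eq_zero

theorem F2of.smul_one_eq (f : B →+* ZMod 2) (b : B) : b • (1 : F2of B f) = f b :=
  mul_one (f b)

theorem bijective_toSpanSingleton_F2of [Finite (B →+* ZMod 2)] :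
    Bijective (LinearMap.toSpanSingleton B (∀ f : B →+* ZMod 2, F2of B f) fun _ ↦ 1) := by
  have apply_eq (b : B) (f : B →+* ZMod 2) :
      LinearMap.toSpanSingleton B (∀ f : B →+* ZMod 2, F2of B f) (fun _ ↦ 1) b f = f b :=
    F2of.smul_one_eq f b
  constructor
  · refine (injective_iff_map_eq_zero _).mpr fun b hb ↦ ?_
    exact eq_zero_of_forall_ringHom_zmod_two fun f ↦ (apply_eq b f).symm.trans (congrFun hb f)
  · intro c
    obtain ⟨b, hb⟩ := exists_forall_ringHom_zmod_apply_eq c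
    exact ⟨b, funext fun f ↦ (apply_eq b f).trans (hb f)⟩

end BooleanRing

/-- For a finite Boolean ring `B` and a `B`-module `M`, the canonical map
`M → ∏_{f : B →+* F₂} F₂(f) ⊗[B] M`, `m ↦ (1 ⊗ m)_f`, is bijective. -/
theorem finite_boolean_ring_module_decomposition (B : Type*) [BooleanRing B] [Finite B]
    (M : Type*) [AddCommGroup M] [Module B M] :
    Function.Bijective
      (fun m : M => fun f : B →+* ZMod 2 => ((1 : F2of B f) ⊗ₜ[B] m :
        TensorProduct B (F2of B f) M)) := by
  have : Finite (B →+* ZMod 2) := DFunLike.finite _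
  exact bijective_pi_tensorProductMk M bijective_toSpanSingleton_F2of
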